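/- Value preservation under exact homomorphism: let h : S_T → S_S be an exact MDP homomorphism, let π_S : S_S → PMF A be a source policy, and define the induced target policy π_T(s) := π_S(h(s)). If V_S is the unique bounded fixed point of the source Bellman operator 𝒯^{π_S} (for the source MDP) and V_T is the unique bounded fixed point of the target Bellman operator 𝒯^{π_T} (for the target MDP), then V_T(s_T) = V_S(h(s_T)) for all target states s_T ∈ S_T. -/

import Mathlib

/-!
Pulling a source value function back along `h` commutes with the Bellman operators: rewards agree,
and the expectation of `V ∘ h` under `T_T(s, a)` is the expectation of `V` under its pushforward
`T_S(h s, a)` (`pmfExp_map`). Hence `V_S ∘ h` is a bounded fixed point of the target operator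
(`bellman_comp`). That operator is a `γ`-contraction in the sup norm (`bellman_contract`), so the
sup distance between `V_T` and `V_S ∘ h` is at most `γ ^ n` times a constant for all `n`, hence zero.
-/

/-- The Bellman evaluation operator for a discounted MDP. -/
noncomputable def bellman {S A : Type*} (T : S → A → PMF S) (R : S → A → ℝ) (γ : ℝ)
    (π : S → PMF A) (V : S → ℝ) : S → ℝ :=
  fun s => ∑' a : A, (π s a).toReal * (R s a + γ * ∑' s' : S, (T s a s').toReal * V s')

/-- A real-valued function is bounded. -/
def IsBoundedFun {S : Type*} (f : S → ℝ) : Prop := ∃ M : ℝ, ∀ s, |f s| ≤ M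

/-- `h : S_T → S_S` is an exact MDP homomorphism: rewards are preserved and the
pushforward of target transition distributions under `h` equals the source ones. -/
def IsExactHomomorphism {SS ST A : Type*}
    (TS : SS → A → PMF SS) (RS : SS → A → ℝ)
    (TT : ST → A → PMF ST) (RT : ST → A → ℝ)
    (h : ST → SS) : Prop :=
  (∀ (s : ST) (a : A), RT s a = RS (h s) a) ∧
  (∀ (s : ST) (a : A), (TT s a).map h = TS (h s) a)

/-- The expectation of a real function under a `PMF`, as a `tsum`; it is `0` when the sum does not
converge, which never happens for bounded functions. -/
noncomputable def pmfExp {α : Type*} (p : PMF α) (f : α → ℝ) : ℝ := ∑' x, (p x).toReal * f x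

theorem hasSum_pmf_toReal {α : Type*} (p : PMF α) : HasSum (fun x => (p x).toReal) 1 := by
  have h := ENNReal.hasSum_toReal p.tsum_coe_ne_top
  rwa [← ENNReal.tsum_toReal_eq p.apply_ne_top, p.tsum_coe, ENNReal.toReal_one] at h

theorem summable_pmf_mul {α : Type*} (p : PMF α) {f : α → ℝ} (hf : IsBoundedFun f) :
    Summable (fun x => (p x).toReal * f x) := by
  obtain ⟨M, hM⟩ := hf
  refine Summable.of_norm_bounded ((hasSum_pmf_toReal p).summable.mul_right M) fun x => ?_
  rw [Real.norm_eq_abs, abs_mul, abs_of_nonneg ENNReal.toReal_nonneg]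
  exact mul_le_mul_of_nonneg_left (hM x) ENNReal.toReal_nonneg

theorem abs_pmfExp_le {α : Type*} (p : PMF α) {f : α → ℝ} {C : ℝ} (hf : ∀ x, |f x| ≤ C) :
    |pmfExp p f| ≤ C := by
  have h := (hasSum_pmf_toReal p).mul_right C
  rw [one_mul] at h
  unfold pmfExp
  rw [← Real.norm_eq_abs]
  refine tsum_of_norm_bounded h fun x => ?_
  rw [Real.norm_eq_abs, abs_mul, abs_of_nonneg ENNReal.toReal_nonneg]
  exact mul_le_mul_of_nonneg_left (hf x) ENNReal.toReal_nonneg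

theorem abs_pmfExp_sub_le {α : Type*} (p : PMF α) {f g : α → ℝ} {C : ℝ}
    (hf : IsBoundedFun f) (hg : IsBoundedFun g) (h : ∀ x, |f x - g x| ≤ C) :
    |pmfExp p f - pmfExp p g| ≤ C := by
  have e : pmfExp p f - pmfExp p g = pmfExp p (fun x => f x - g x) := by
    unfold pmfExp
    rw [← (summable_pmf_mul p hf).tsum_sub (summable_pmf_mul p hg)]
    simp only [mul_sub]
  rw [e]
  exact abs_pmfExp_le p h

/-- Change of variables for the pushforward of a `PMF`: group the sum along the fibres of `h`. -/
theorem pmfExp_map {α β : Type*} (p : PMF α) (h : α → β) {f : β → ℝ} (hf : IsBoundedFun f) :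
    pmfExp (p.map h) f = pmfExp p (f ∘ h) := by
  have hb : IsBoundedFun (f ∘ h) := hf.imp fun M hM x => hM (h x)
  have key := (summable_pmf_mul p hb).hasSum.tsum_fiberwise h
  refine Eq.trans ?_ key.tsum_eq
  refine tsum_congr fun c => ?_
  have e1 : ((p.map h) c).toReal = ∑' b : h ⁻¹' {c}, (p b).toReal := by
    rw [← ENNReal.tsum_toReal_eq fun b => p.apply_ne_top _, tsum_subtype (h ⁻¹' {c}) p,
      PMF.map_apply]
    congr 1
    refine tsum_congr fun a => ?_
    by_cases hc : c = h a
    · simp [hc]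
    · simp [hc, Ne.symm hc]
  rw [e1, ← tsum_mul_right]
  refine tsum_congr fun b => ?_
  have hbc : h b = c := b.2
  simp [hbc]

theorem bellman_eq {S A : Type*} (T : S → A → PMF S) (R : S → A → ℝ) (γ : ℝ)
    (π : S → PMF A) (V : S → ℝ) (s : S) :
    bellman T R γ π V s = pmfExp (π s) (fun a => R s a + γ * pmfExp (T s a) V) := rfl

/-- One-step state-action values are bounded, so the outer sum over actions converges. -/
theorem isBoundedFun_backup {S A : Type*} (T : S → A → PMF S) {R : S → A → ℝ} (γ : ℝ)
    (hR : ∃ M : ℝ, ∀ s a, |R s a| ≤ M) {V : S → ℝ} (hV : IsBoundedFun V) (s : S) :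
    IsBoundedFun (fun a => R s a + γ * pmfExp (T s a) V) := by
  obtain ⟨M, hM⟩ := hR
  obtain ⟨N, hN⟩ := hV
  refine ⟨M + |γ| * N, fun a => (abs_add_le _ _).trans (add_le_add (hM s a) ?_)⟩
  rw [abs_mul]
  exact mul_le_mul_of_nonneg_left (abs_pmfExp_le _ hN) (abs_nonneg γ)

/-- The Bellman operator is a `γ`-contraction in the sup norm on bounded functions. -/
theorem bellman_contract {S A : Type*} (T : S → A → PMF S) {R : S → A → ℝ} {γ : ℝ} (hγ : 0 ≤ γ)
    (hR : ∃ M : ℝ, ∀ s a, |R s a| ≤ M) (π : S → PMF A) {V W : S → ℝ}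
    (hV : IsBoundedFun V) (hW : IsBoundedFun W) {C : ℝ} (hC : ∀ s, |V s - W s| ≤ C) (s : S) :
    |bellman T R γ π V s - bellman T R γ π W s| ≤ γ * C := by
  rw [bellman_eq, bellman_eq]
  refine abs_pmfExp_sub_le _ (isBoundedFun_backup T γ hR hV s)
    (isBoundedFun_backup T γ hR hW s) fun a => ?_
  rw [add_sub_add_left_eq_sub, ← mul_sub, abs_mul, abs_of_nonneg hγ]
  exact mul_le_mul_of_nonneg_left (abs_pmfExp_sub_le _ hV hW hC) hγ

/-- Pullback along an exact homomorphism intertwines the two Bellman operators. -/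
theorem bellman_comp {SS ST A : Type*} {TS : SS → A → PMF SS} {RS : SS → A → ℝ}
    {TT : ST → A → PMF ST} {RT : ST → A → ℝ} (γ : ℝ) {h : ST → SS}
    (hhom : IsExactHomomorphism TS RS TT RT h) (πS : SS → PMF A) {V : SS → ℝ}
    (hV : IsBoundedFun V) :
    bellman TT RT γ (fun s => πS (h s)) (V ∘ h) = bellman TS RS γ πS V ∘ h := by
  funext s
  simp only [Function.comp_apply, bellman_eq, hhom.1, ← hhom.2, pmfExp_map _ _ hV]

/-- Value preservation under exact homomorphism: if `h` is an exact MDP homomorphism,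
`π_T(s) := π_S(h(s))` is the induced target policy, and `V_S`, `V_T` are the (unique)
bounded fixed points of the corresponding Bellman operators, then
`V_T(s_T) = V_S(h(s_T))` for every target state. -/
theorem value_preservation {SS ST A : Type*} [Countable SS] [Countable ST] [Countable A]
    (TS : SS → A → PMF SS) (RS : SS → A → ℝ)
    (TT : ST → A → PMF ST) (RT : ST → A → ℝ)
    (γ : ℝ) (hγ0 : 0 < γ) (hγ1 : γ < 1)
    (hRS : ∃ M : ℝ, ∀ s a, |RS s a| ≤ M) (hRT : ∃ M : ℝ, ∀ s a, |RT s a| ≤ M)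
    (h : ST → SS) (hhom : IsExactHomomorphism TS RS TT RT h)
    (πS : SS → PMF A)
    (VS : SS → ℝ) (hVSb : IsBoundedFun VS) (hVSfix : bellman TS RS γ πS VS = VS)
    (VT : ST → ℝ) (hVTb : IsBoundedFun VT)
    (hVTfix : bellman TT RT γ (fun s => πS (h s)) VT = VT) :
    ∀ sT : ST, VT sT = VS (h sT) := by
  have hWb : IsBoundedFun (VS ∘ h) := hVSb.imp fun M hM x => hM (h x)
  have hW : bellman TT RT γ (fun s => πS (h s)) (VS ∘ h) = VS ∘ h := by
    rw [bellman_comp γ hhom πS hVSb, hVSfix]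
  obtain ⟨M, hM⟩ := hVTb
  obtain ⟨N, hN⟩ := hWb
  have bound : ∀ n : ℕ, ∀ s, |VT s - (VS ∘ h) s| ≤ γ ^ n * (M + N) := by
    intro n
    induction n with
    | zero =>
      intro s
      rw [pow_zero, one_mul]
      exact (abs_sub _ _).trans (add_le_add (hM s) (hN s))
    | succ n ih =>
      intro s
      have := bellman_contract TT hγ0.le hRT (fun s => πS (h s)) ⟨M, hM⟩ ⟨N, hN⟩ ih s
      rwa [hVTfix, hW, ← mul_assoc, ← pow_succ'] at this
  intro s
  have lim : Filter.Tendsto (fun n : ℕ => γ ^ n * (M + N)) Filter.atTop (nhds 0) := by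
    simpa using (tendsto_pow_atTop_nhds_zero_of_lt_one hγ0.le hγ1).mul_const (M + N)
  have h0 : |VT s - (VS ∘ h) s| ≤ 0 := ge_of_tendsto' lim fun n => bound n s
  exact sub_eq_zero.mp (abs_nonpos_iff.mp h0)
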